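/- Let F be a field with char F ≠ 2 and char F ≠ 3, and let 𝕄 = M₇(F). Every irreducible Malcev module V over 𝕄 is isomorphic to the regular module Reg 𝕄: there exists a bijective F-linear map ψ : 𝕄 → V such that ψ(xa) = ψ(x)·a for all x, a ∈ 𝕄. -/

import Mathlib

open TensorProduct

/-- Multiplication of the 7-dimensional simple non-Lie Malcev algebra `M₇(F)`,
realised on `Fin 7 → F`; the index `t` corresponds to the basis element `e_{t+1}`. -/
def m7mul {F : Type*} [Field F] (a b : Fin 7 → F) : Fin 7 → F :=
  ![(a 1 * b 4 - a 4 * b 1) + (a 2 * b 5 - a 5 * b 2) + (a 3 * b 6 - a 6 * b 3),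
    2 * (a 0 * b 1 - a 1 * b 0) - 2 * (a 5 * b 6 - a 6 * b 5),
    2 * (a 0 * b 2 - a 2 * b 0) + 2 * (a 4 * b 6 - a 6 * b 4),
    2 * (a 0 * b 3 - a 3 * b 0) - 2 * (a 4 * b 5 - a 5 * b 4),
    -2 * (a 0 * b 4 - a 4 * b 0) + 2 * (a 2 * b 3 - a 3 * b 2),
    -2 * (a 0 * b 5 - a 5 * b 0) - 2 * (a 1 * b 3 - a 3 * b 1),
    -2 * (a 0 * b 6 - a 6 * b 0) + 2 * (a 1 * b 2 - a 2 * b 1)]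

/-- Multiplication of the 7-dimensional Malcev algebra `𝕄₇(γ)` coming from the
division Cayley–Dickson algebra, realised on `Fin 7 → F`; the indices
`0,…,6` correspond to the basis `i, j, k, v, vi, vj, vk`. -/
def mGammaMul {F : Type*} [Field F] (γ : F) (a b : Fin 7 → F) : Fin 7 → F :=
  ![2 * (a 1 * b 2 - a 2 * b 1) + 2 * γ * (a 3 * b 4 - a 4 * b 3)
      + 2 * γ * (a 5 * b 6 - a 6 * b 5),
    -2 * (a 0 * b 2 - a 2 * b 0) + 2 * γ * (a 3 * b 5 - a 5 * b 3)
      - 2 * γ * (a 4 * b 6 - a 6 * b 4),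
    2 * (a 0 * b 1 - a 1 * b 0) + 2 * γ * (a 3 * b 6 - a 6 * b 3)
      + 2 * γ * (a 4 * b 5 - a 5 * b 4),
    2 * (a 0 * b 4 - a 4 * b 0) + 2 * (a 1 * b 5 - a 5 * b 1)
      + 2 * (a 2 * b 6 - a 6 * b 2),
    -2 * (a 0 * b 3 - a 3 * b 0) - 2 * (a 1 * b 6 - a 6 * b 1)
      + 2 * (a 2 * b 5 - a 5 * b 2),
    2 * (a 0 * b 6 - a 6 * b 0) - 2 * (a 1 * b 3 - a 3 * b 1)
      - 2 * (a 2 * b 4 - a 4 * b 2),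
    -2 * (a 0 * b 5 - a 5 * b 0) + 2 * (a 1 * b 4 - a 4 * b 1)
      - 2 * (a 2 * b 3 - a 3 * b 2)]

/-- The Jacobian `J(x,y,z) = (xy)z + (yz)x + (zx)y` of a multiplication. -/
def malJac {A : Type*} [Add A] (mul : A → A → A) (x y z : A) : A :=
  mul (mul x y) z + mul (mul y z) x + mul (mul z x) y

/-- `mul` is a Malcev multiplication: `x·x = 0` and `J(x,y,xz) = J(x,y,z)·x`. -/
def IsMalcevFun {A : Type*} [AddCommGroup A] (mul : A → A → A) : Prop :=
  (∀ x, mul x x = 0) ∧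
    ∀ x y z, malJac mul x y (mul x z) = mul (malJac mul x y z) x

/-- `e 0, …, e 6` is a copy of the standard basis `e₁, …, e₇` of `M₇(F)`:
linearly independent elements multiplying according to the `M₇(F)` table. -/
def IsM7Copy {F M : Type*} [Field F] [AddCommGroup M] [Module F M]
    (mul : M →ₗ[F] M →ₗ[F] M) (e : Fin 7 → M) : Prop :=
  LinearIndependent F e ∧
  (∀ s t : Fin 7, mul (e s) (e t) = - mul (e t) (e s)) ∧
  mul (e 0) (e 1) = (2 : F) • e 1 ∧
  mul (e 0) (e 2) = (2 : F) • e 2 ∧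
  mul (e 0) (e 3) = (2 : F) • e 3 ∧
  mul (e 0) (e 4) = (-2 : F) • e 4 ∧
  mul (e 0) (e 5) = (-2 : F) • e 5 ∧
  mul (e 0) (e 6) = (-2 : F) • e 6 ∧
  mul (e 1) (e 2) = (2 : F) • e 6 ∧
  mul (e 1) (e 3) = (-2 : F) • e 5 ∧
  mul (e 1) (e 4) = e 0 ∧
  mul (e 1) (e 5) = 0 ∧
  mul (e 1) (e 6) = 0 ∧
  mul (e 2) (e 3) = (2 : F) • e 4 ∧
  mul (e 2) (e 4) = 0 ∧
  mul (e 2) (e 5) = e 0 ∧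
  mul (e 2) (e 6) = 0 ∧
  mul (e 3) (e 4) = 0 ∧
  mul (e 3) (e 5) = 0 ∧
  mul (e 3) (e 6) = e 0 ∧
  mul (e 4) (e 5) = (-2 : F) • e 3 ∧
  mul (e 4) (e 6) = (2 : F) • e 2 ∧
  mul (e 5) (e 6) = (-2 : F) • e 1

/-- `e 0, …, e 6` is a copy of the basis `i, j, k, v, vi, vj, vk` of `𝕄₇(γ)`:
linearly independent elements multiplying according to the `𝕄₇(γ)` table. -/
def IsMGammaCopy {F M : Type*} [Field F] [AddCommGroup M] [Module F M]
    (γ : F) (mul : M →ₗ[F] M →ₗ[F] M) (e : Fin 7 → M) : Prop :=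
  LinearIndependent F e ∧
  (∀ s t : Fin 7, mul (e s) (e t) = - mul (e t) (e s)) ∧
  mul (e 0) (e 1) = (2 : F) • e 2 ∧
  mul (e 0) (e 2) = (-2 : F) • e 1 ∧
  mul (e 0) (e 3) = (-2 : F) • e 4 ∧
  mul (e 0) (e 4) = (2 : F) • e 3 ∧
  mul (e 0) (e 5) = (-2 : F) • e 6 ∧
  mul (e 0) (e 6) = (2 : F) • e 5 ∧
  mul (e 1) (e 2) = (2 : F) • e 0 ∧
  mul (e 1) (e 3) = (-2 : F) • e 5 ∧
  mul (e 1) (e 4) = (2 : F) • e 6 ∧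
  mul (e 1) (e 5) = (2 : F) • e 3 ∧
  mul (e 1) (e 6) = (-2 : F) • e 4 ∧
  mul (e 2) (e 3) = (-2 : F) • e 6 ∧
  mul (e 2) (e 4) = (-2 : F) • e 5 ∧
  mul (e 2) (e 5) = (2 : F) • e 4 ∧
  mul (e 2) (e 6) = (2 : F) • e 3 ∧
  mul (e 3) (e 4) = (2 * γ) • e 0 ∧
  mul (e 3) (e 5) = (2 * γ) • e 1 ∧
  mul (e 3) (e 6) = (2 * γ) • e 2 ∧
  mul (e 4) (e 5) = (2 * γ) • e 2 ∧
  mul (e 4) (e 6) = (-(2 * γ)) • e 1 ∧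
  mul (e 5) (e 6) = (2 * γ) • e 0

/-- The multiplication of the split null extension `E = M ⊕ V` of a Malcev
algebra `M` by a module `V` with representation `ρ`:
`(x + v)(y + w) = xy + (ρ_y v − ρ_x w)`. -/
def sneFun {F M V : Type*} [Field F] [AddCommGroup M] [Module F M]
    [AddCommGroup V] [Module F V]
    (mul : M → M → M) (ρ : M →ₗ[F] Module.End F V) (p q : M × V) : M × V :=
  (mul p.1 q.1, ρ q.1 p.2 - ρ p.1 q.2)

/-- The function `{x,y,z} = (xy)z − (xz)y + 2x(yz)`. -/
def trip (F : Type*) {A : Type*} [Field F] [AddCommGroup A] [Module F A]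
    (mul : A → A → A) (x y z : A) : A :=
  mul (mul x y) z - mul (mul x z) y + (2 : F) • mul x (mul y z)

/-- The function `h(y,z,t,x,u) = {yz,t,u}x + {yz,t,x}u + {yx,z,u}t + {yu,z,x}t`. -/
def hfun (F : Type*) {A : Type*} [Field F] [AddCommGroup A] [Module F A]
    (mul : A → A → A) (y z t x u : A) : A :=
  mul (trip F mul (mul y z) t u) x + mul (trip F mul (mul y z) t x) u
    + mul (trip F mul (mul y x) z u) t + mul (trip F mul (mul y u) z x) t

/-- The function `p(x,y,z,t) = −{zt,x,y} − {yt,z,x} + {xt,y,z}`. -/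
def pfun (F : Type*) {A : Type*} [Field F] [AddCommGroup A] [Module F A]
    (mul : A → A → A) (x y z t : A) : A :=
  - trip F mul (mul z t) x y - trip F mul (mul y t) z x + trip F mul (mul x t) y z

/-- `α` belongs to the centroid `Γ(M)`: `(xα)y = (xy)α = x(yα)` for all `x, y`. -/
def IsCentroidElem {F M : Type*} [Field F] [AddCommGroup M] [Module F M]
    (mul : M →ₗ[F] M →ₗ[F] M) (α : M →ₗ[F] M) : Prop :=
  ∀ x y : M, mul (α x) y = α (mul x y) ∧ mul x (α y) = α (mul x y)

/-!
Sagle's identity in the split null extension turns the Malcev condition on `V` into an identity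
between the operators `ρ x`. Write `M₇(F)` in Zorn's vector form, with `h = e₁` and with `e a` and
`f b` for the vectors `a`, `b` of `F³`. On `V` the operator `e a` lowers the weights of `h` by `2`
up to a defect `K = he - eh + 2e` with `Kh = -2K` and `hK = 2K`, and `f b` raises them in the same
sense. For `e = e (a × b)` the identity also gives `2[f a, f b] = he - eh - 6e`, and comparing
weights yields `4K = 3eh(h - 2)`. With `Kh = -2K` this becomes `e(h³ - 4h) = 0`, and likewise for
`f`, so `h³ = 4h` as soon as no nonzero vector is annihilated by all `e a` and `f b`.

If `0` were not a weight of `V`, then the weights would be `±2`, and both weight spaces would be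
annihilated by all `e a` and `f b`. So some `w ≠ 0` satisfies `w·h = 0`, and the operator identity
forces the `e a` and `f b` to act on `w` as they act on `h` in the regular module.
-/

section

open Matrix

variable {F M V : Type*} [Field F] [AddCommGroup M] [Module F M] [AddCommGroup V] [Module F V]

theorem malJac_linearization (mul : M →ₗ[F] M →ₗ[F] M) (hm : IsMalcevFun fun x y ↦ mul x y)
    (w x y z : M) :
    malJac (fun x y ↦ mul x y) x y (mul w z) + malJac (fun x y ↦ mul x y) w y (mul x z) =
      mul (malJac (fun x y ↦ mul x y) x y z) w + mul (malJac (fun x y ↦ mul x y) w y z) x := by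
  have h_add := hm.2 (x + w) y z
  have h_x := hm.2 x y z
  have h_w := hm.2 w y z
  simp only [malJac, map_add, LinearMap.add_apply] at h_add h_x h_w ⊢
  linear_combination (norm := module) h_add - h_x - h_w

theorem sagle_identity (h2 : (2 : F) ≠ 0) (mul : M →ₗ[F] M →ₗ[F] M)
    (hm : IsMalcevFun fun x y ↦ mul x y) (x y z t : M) :
    mul (mul x z) (mul y t) =
      mul (mul (mul x y) z) t + mul (mul (mul y z) t) x + mul (mul (mul z t) x) y
        + mul (mul (mul t x) y) z := by
  have anti (a b : M) : mul a b = -mul b a := (LinearMap.IsAlt.neg hm.1 b a).symm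
  have anti_mul (a b c : M) : mul a (mul b c) = -mul (mul b c) a := anti _ _
  have h_tz := malJac_linearization mul hm z t x y
  have h_xz := malJac_linearization mul hm z x y t
  have h_yz := malJac_linearization mul hm z y t x
  simp only [malJac, map_add, LinearMap.add_apply, anti_mul t, anti_mul x, anti_mul y,
    anti z y, anti z x, anti z t, anti y x, anti y t, anti x t, map_neg, LinearMap.neg_apply,
    anti (mul x y) (mul t z), anti (mul x z) (mul t y), anti (mul y z) (mul t x)]
    at h_tz h_xz h_yz ⊢
  refine smul_right_injective M h2 ?_
  linear_combination (norm := module) h_tz - h_xz + h_yz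

/-- The condition on the operators `v ↦ v·x = ρ x v` of a right representation that Sagle's
identity `(vz)(yt) = ((vy)z)t + ((yz)t)v + ((zt)v)y + ((tv)y)z` in the split null extension
imposes for `v` in the module. -/
def IsMalcevRep (mul : M →ₗ[F] M →ₗ[F] M) (ρ : M →ₗ[F] Module.End F V) : Prop :=
  ∀ y z t, ρ (mul y t) * ρ z =
    ρ t * ρ z * ρ y - ρ z * ρ y * ρ t - ρ (mul (mul y z) t) - ρ y * ρ (mul z t)

theorem isMalcevRep_of_isMalcevFun_sneFun (h2 : (2 : F) ≠ 0) {mul : M →ₗ[F] M →ₗ[F] M}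
    {ρ : M →ₗ[F] Module.End F V} (hm : IsMalcevFun (sneFun (fun x y ↦ mul x y) ρ)) :
    IsMalcevRep mul ρ := by
  intro y z t
  ext v
  let sne : (M × V) →ₗ[F] (M × V) →ₗ[F] (M × V) :=
    LinearMap.mk₂ F (sneFun (fun x y ↦ mul x y) ρ)
      (fun p p' q ↦ by ext <;> simp [sneFun]; abel) (fun c p q ↦ by ext <;> simp [sneFun, smul_sub])
      (fun p q q' ↦ by ext <;> simp [sneFun]; abel) (fun c p q ↦ by ext <;> simp [sneFun, smul_sub])
  have h := congrArg Prod.snd (sagle_identity h2 sne hm (0, v) (y, 0) (z, 0) (t, 0))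
  simp only [sne, LinearMap.mk₂_apply, sneFun, Prod.snd_add, map_zero, LinearMap.zero_apply,
    sub_zero, zero_sub, map_neg] at h
  simp only [LinearMap.sub_apply, Module.End.mul_apply]
  linear_combination (norm := module) h

namespace IsMalcevRep

variable {mul : M →ₗ[F] M →ₗ[F] M} {ρ : M →ₗ[F] Module.End F V}

theorem apply_mul_apply (hρ : IsMalcevRep mul ρ) (y z t : M) (v : V) :
    ρ (mul y t) (ρ z v) =
      ρ t (ρ z (ρ y v)) - ρ z (ρ y (ρ t v)) - ρ (mul (mul y z) t) v - ρ y (ρ (mul z t) v) :=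
  LinearMap.congr_fun (hρ y z t) v

theorem sum_lie_eq_neg_malJac (hρ : IsMalcevRep mul ρ) (halt : mul.IsAlt) (y z t : M) :
    ⁅ρ y, ρ (mul z t)⁆ + ⁅ρ z, ρ (mul t y)⁆ + ⁅ρ t, ρ (mul y z)⁆ =
      -ρ (malJac (fun x y ↦ mul x y) y z t) := by
  have h_y := hρ y z t
  have h_z := hρ z t y
  have h_t := hρ t y z
  rw [← halt.neg t y, map_neg] at h_y
  rw [← halt.neg y z, map_neg] at h_z
  rw [← halt.neg z t, map_neg] at h_t
  simp only [malJac, map_add, Ring.lie_def]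
  linear_combination (norm := noncomm_ring) h_y + h_z + h_t

end IsMalcevRep

section QuasiLowering

variable {A : Type*} [Ring A]

/-- The obstruction to `e` lowering `h`-weights by `2`, that is, to `h * e = e * (h - 2)`. -/
def weightDefect (h e : A) : A := h * e - e * h + 2 * e

/-- `e` lowers `h`-weights by `2` up to a defect that factors through the weight `-2` and takes
values in the weight `2`. -/
structure IsQuasiLowering (h e : A) : Prop where
  weightDefect_mul : weightDefect h e * h = -2 * weightDefect h e
  mul_weightDefect : h * weightDefect h e = 2 * weightDefect h e

/-- If `f` and `g` had no defect then `f * g` would raise weights by `4`. -/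
theorem IsQuasiLowering.add_two_mul_mul_sub_two_eq_zero {h f g : A}
    (hf : IsQuasiLowering (-h) (-f)) (hg : IsQuasiLowering (-h) (-g)) :
    (h + 2) * (h * (f * g) - f * g * h - 4 * (f * g)) * (h - 2) = 0 := by
  have hf' : (h + 2) * weightDefect (-h) (-f) = 0 := by
    linear_combination (norm := noncomm_ring) -hf.mul_weightDefect
  have hg' : weightDefect (-h) (-g) * (h - 2) = 0 := by
    linear_combination (norm := noncomm_ring) -hg.weightDefect_mul
  calc (h + 2) * (h * (f * g) - f * g * h - 4 * (f * g)) * (h - 2)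
      = (h + 2) * weightDefect (-h) (-f) * g * (h - 2)
          + (h + 2) * f * (weightDefect (-h) (-g) * (h - 2)) := by
        simp only [weightDefect]; noncomm_ring
    _ = 0 := by rw [hf', hg']; simp only [zero_mul, mul_zero, add_zero]

theorem IsQuasiLowering.four_mul_weightDefect {h e f g : A} (he : IsQuasiLowering h e)
    (hf : IsQuasiLowering (-h) (-f)) (hg : IsQuasiLowering (-h) (-g))
    (hfg : 2 * ⁅f, g⁆ = h * e - e * h - 6 * e) :
    16 * (4 * weightDefect h e) = 16 * (3 * (e * h * (h - 2))) := by
  set K := weightDefect h e with hK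
  have h_comm : (h + 2) * (h * ⁅f, g⁆ - ⁅f, g⁆ * h - 4 * ⁅f, g⁆) * (h - 2) = 0 := by
    have h_fg := hf.add_two_mul_mul_sub_two_eq_zero hg
    have h_gf := hg.add_two_mul_mul_sub_two_eq_zero hf
    rw [Ring.lie_def]
    linear_combination (norm := noncomm_ring) h_fg - h_gf
  have hC : 2 * ⁅f, g⁆ = K - 8 * e := by
    rw [hfg, hK, weightDefect]; noncomm_ring
  have he' : h * e = e * h - 2 * e + K := by rw [hK, weightDefect]; noncomm_ring
  have h_shift : 2 * (h * ⁅f, g⁆ - ⁅f, g⁆ * h - 4 * ⁅f, g⁆) = -8 * (K - 6 * e) := by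
    linear_combination (norm := noncomm_ring)
      h * hC - hC * h - 4 * hC + he.mul_weightDefect - he.weightDefect_mul - 8 * he'
  have h_zero : 8 * ((h + 2) * (K - 6 * e) * (h - 2)) = 0 := by
    linear_combination (norm := noncomm_ring) -2 * h_comm + (h + 2) * h_shift * (h - 2)
  linear_combination (norm := noncomm_ring) h_zero - 8 * he.mul_weightDefect * (h - 2)
    + 48 * he' * (h - 2) + 16 * he.weightDefect_mul

end QuasiLowering

theorem single_cross_single {R : Type*} [CommRing R] (i : Fin 3) :
    (Pi.single (i + 1) 1 : Fin 3 → R) ⨯₃ Pi.single (i + 2) 1 = Pi.single i 1 := by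
  ext j
  fin_cases i <;> fin_cases j <;> simp [cross_apply]

theorem linearMap_ext_cross {R N : Type*} [CommRing R] [AddCommGroup N] [Module R N]
    {φ ψ : (Fin 3 → R) →ₗ[R] N} (h : ∀ a b, φ (a ⨯₃ b) = ψ (a ⨯₃ b)) : φ = ψ :=
  (Pi.basisFun R (Fin 3)).ext fun i ↦ by
    rw [Pi.basisFun_apply, ← single_cross_single]
    exact h _ _

/-- A copy of the split simple Malcev algebra in Zorn's vector form: an element `h` and two copies
`e`, `f` of three-dimensional space, multiplying by means of the dot and the cross product. For
`M₇(F)` these are `e₁` and the spans of `e₂, e₃, e₄` and of `e₅, e₆, e₇`. -/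
structure ZornFrame (mul : M →ₗ[F] M →ₗ[F] M) where
  h : M
  e : (Fin 3 → F) →ₗ[F] M
  f : (Fin 3 → F) →ₗ[F] M
  alt : mul.IsAlt
  h_e (a) : mul h (e a) = (2 : F) • e a
  h_f (a) : mul h (f a) = (-2 : F) • f a
  e_e (a b) : mul (e a) (e b) = (2 : F) • f (a ⨯₃ b)
  f_f (a b) : mul (f a) (f b) = (-2 : F) • e (a ⨯₃ b)
  e_f (a b) : mul (e a) (f b) = (a ⬝ᵥ b) • h

namespace ZornFrame

variable {mul : M →ₗ[F] M →ₗ[F] M} {ρ : M →ₗ[F] Module.End F V} (S : ZornFrame mul)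

theorem e_h (a : Fin 3 → F) : mul (S.e a) S.h = (-2 : F) • S.e a := by
  rw [← S.alt.neg, S.h_e, neg_smul]

theorem f_h (a : Fin 3 → F) : mul (S.f a) S.h = (2 : F) • S.f a := by
  rw [← S.alt.neg, S.h_f, neg_smul, neg_neg]

theorem f_e (a b : Fin 3 → F) : mul (S.f a) (S.e b) = -(a ⬝ᵥ b) • S.h := by
  rw [← S.alt.neg, S.e_f, neg_smul, dotProduct_comm]

/-- The symmetry of the multiplication table that exchanges `e` and `f`. -/
@[simps]
def flip : ZornFrame mul where
  h := -S.h
  e := -S.f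
  f := -S.e
  alt := S.alt
  h_e a := by simp [S.h_f]
  h_f a := by simp [S.h_e]
  e_e a b := by simp [S.f_f]
  f_f a b := by simp [S.e_e]
  e_f a b := by simp [S.f_e]

/-- No nonzero vector of the module is annihilated by all `e a` and all `f a`. -/
def NoInvariants (ρ : M →ₗ[F] Module.End F V) : Prop :=
  ∀ v, (∀ a, ρ (S.e a) v = 0) → (∀ a, ρ (S.f a) v = 0) → v = 0

variable {S} in
theorem NoInvariants.flip (hinv : S.NoInvariants ρ) : S.flip.NoInvariants ρ :=
  fun v he hf ↦ hinv v (fun a ↦ by simpa using hf a) (fun a ↦ by simpa using he a)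

theorem isQuasiLowering_e (hρ : IsMalcevRep mul ρ) (a : Fin 3 → F) :
    IsQuasiLowering (ρ S.h) (ρ (S.e a)) := by
  have h_heh := hρ S.h (S.e a) S.h
  have h_ehh := hρ (S.e a) S.h S.h
  simp only [S.alt.self_eq_zero, S.h_e, S.e_h, map_smul, LinearMap.smul_apply, map_zero, zero_mul,
    mul_zero, smul_mul_assoc, mul_smul_comm] at h_heh h_ehh
  simp only [neg_smul, ofNat_smul_eq_nsmul] at h_heh h_ehh
  constructor
  · rw [weightDefect]
    linear_combination (norm := noncomm_ring) -h_heh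
  · rw [weightDefect]
    linear_combination (norm := noncomm_ring) -h_ehh

theorem isQuasiLowering_f (hρ : IsMalcevRep mul ρ) (a : Fin 3 → F) :
    IsQuasiLowering (-ρ S.h) (-ρ (S.f a)) := by
  simpa using S.flip.isQuasiLowering_e hρ a

theorem two_mul_lie_f_f (h2 : (2 : F) ≠ 0) (hρ : IsMalcevRep mul ρ) (a b : Fin 3 → F) :
    2 * ⁅ρ (S.f a), ρ (S.f b)⁆ =
      ρ S.h * ρ (S.e (a ⨯₃ b)) - ρ (S.e (a ⨯₃ b)) * ρ S.h - 6 * ρ (S.e (a ⨯₃ b)) := by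
  have h_lie := hρ.sum_lie_eq_neg_malJac S.alt S.h (S.f a) (S.f b)
  have h_ba : b ⨯₃ a = -(a ⨯₃ b) := (cross_anticomm a b).symm
  simp only [malJac, S.f_f, S.f_h, S.h_f, S.e_h, map_smul, map_add, LinearMap.smul_apply, h_ba,
    map_neg] at h_lie
  simp only [Ring.lie_def, neg_smul, ofNat_smul_eq_nsmul] at h_lie ⊢
  refine smul_right_injective _ h2 ?_
  simp only [ofNat_smul_eq_nsmul]
  linear_combination (norm := noncomm_ring) h_lie

section WeightRelation

variable (h2 : (2 : F) ≠ 0) (hρ : IsMalcevRep mul ρ)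

include h2 hρ

theorem four_smul_apply_h_apply_e (a : Fin 3 → F) (v : V) :
    (4 : F) • ρ S.h (ρ (S.e a) v) =
      ρ (S.e a) ((3 : F) • ρ S.h (ρ S.h v) - (2 : F) • ρ S.h v - (8 : F) • v) := by
  have h16 : (16 : F) ≠ 0 := by rw [show (16 : F) = 2 ^ 4 by norm_num]; exact pow_ne_zero 4 h2
  have h_eq : LinearMap.mulLeft F ((4 : F) • ρ S.h) ∘ₗ ρ ∘ₗ S.e =
      LinearMap.mulRight F ((3 : F) • (ρ S.h * ρ S.h) - (2 : F) • ρ S.h - (8 : F) • 1)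
        ∘ₗ ρ ∘ₗ S.e := by
    refine linearMap_ext_cross fun b c ↦ ?_
    have h_defect := (S.isQuasiLowering_e hρ (b ⨯₃ c)).four_mul_weightDefect
      (S.isQuasiLowering_f hρ b) (S.isQuasiLowering_f hρ c) (S.two_mul_lie_f_f h2 hρ b c)
    refine smul_right_injective _ h16 ?_
    simp only [LinearMap.comp_apply, LinearMap.mulLeft_apply, LinearMap.mulRight_apply,
      ofNat_smul_eq_nsmul, weightDefect] at h_defect ⊢
    linear_combination (norm := noncomm_ring) h_defect
  simpa using LinearMap.congr_fun (LinearMap.congr_fun h_eq a) v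

theorem apply_h_apply_e {c d : F} (hcd : 4 * d = (c - 2) * (3 * c + 4)) {v : V}
    (hv : ρ S.h v = c • v) (a : Fin 3 → F) : ρ S.h (ρ (S.e a) v) = d • ρ (S.e a) v := by
  have h4 : (4 : F) ≠ 0 := by rw [show (4 : F) = 2 ^ 2 by norm_num]; exact pow_ne_zero 2 h2
  refine smul_right_injective V h4 ?_
  simp only [S.four_smul_apply_h_apply_e h2 hρ, hv, map_smul, map_sub, smul_smul, hcd]
  module

theorem apply_h_apply_f {c d : F} (hcd : 4 * d = (c + 2) * (4 - 3 * c)) {v : V}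
    (hv : ρ S.h v = c • v) (a : Fin 3 → F) : ρ S.h (ρ (S.f a) v) = d • ρ (S.f a) v := by
  have h := S.flip.apply_h_apply_e h2 hρ (c := -c) (d := -d) (by linear_combination -hcd)
    (v := v) (by simp [hv]) a
  simpa using h

theorem apply_e_apply_h_cubed (h3 : (3 : F) ≠ 0) (a : Fin 3 → F) (v : V) :
    ρ (S.e a) (ρ S.h (ρ S.h (ρ S.h v)) - (4 : F) • ρ S.h v) = 0 := by
  have h_defect := LinearMap.congr_fun (S.isQuasiLowering_e hρ a).weightDefect_mul v
  have h_v := S.four_smul_apply_h_apply_e h2 hρ a v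
  have h_hv := S.four_smul_apply_h_apply_e h2 hρ a (ρ S.h v)
  refine smul_right_injective V h3 ?_
  simp only [weightDefect, neg_mul, two_mul, map_sub, map_smul, Module.End.mul_apply,
    LinearMap.add_apply, LinearMap.sub_apply, LinearMap.neg_apply] at h_defect h_v h_hv ⊢
  linear_combination (norm := module) (4 : F) • h_defect - h_hv - (2 : F) • h_v

variable {S} in
theorem NoInvariants.apply_h_cubed (hinv : S.NoInvariants ρ) (h3 : (3 : F) ≠ 0) (v : V) :
    ρ S.h (ρ S.h (ρ S.h v)) = (4 : F) • ρ S.h v := by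
  rw [← sub_eq_zero]
  refine hinv _ (S.apply_e_apply_h_cubed h2 hρ h3 · v) fun a ↦ ?_
  have h := S.flip.apply_e_apply_h_cubed h2 hρ h3 a v
  simp only [flip_h, flip_e, map_neg, LinearMap.neg_apply, map_sub, map_smul] at h ⊢
  linear_combination (norm := module) h

end WeightRelation

/-- The vector `w` of a module behaves like the element `h` of the regular module: the submodule it
generates is the image of the regular module under `h ↦ w`, `2 • e a ↦ ρ (e a) w` and
`-2 • f a ↦ ρ (f a) w`. -/
structure ActsLikeH (ρ : M →ₗ[F] Module.End F V) (w : V) : Prop where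
  h : ρ S.h w = 0
  h_e (a) : ρ S.h (ρ (S.e a) w) = (-2 : F) • ρ (S.e a) w
  h_f (a) : ρ S.h (ρ (S.f a) w) = (2 : F) • ρ (S.f a) w
  e_e (a b) : ρ (S.e b) (ρ (S.e a) w) = (-2 : F) • ρ (S.f (a ⨯₃ b)) w
  f_f (a b) : ρ (S.f b) (ρ (S.f a) w) = (2 : F) • ρ (S.e (a ⨯₃ b)) w
  e_f (a b) : ρ (S.e b) (ρ (S.f a) w) = (2 * (a ⬝ᵥ b)) • w
  f_e (a b) : ρ (S.f b) (ρ (S.e a) w) = (2 * (a ⬝ᵥ b)) • w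

section WeightZero

variable (h2 : (2 : F) ≠ 0) (hρ : IsMalcevRep mul ρ) {w : V} (hw : ρ S.h w = 0)

include h2 hρ hw

theorem apply_f_apply_f_of_apply_h_eq_zero (h3 : (3 : F) ≠ 0) (a b : Fin 3 → F) :
    ρ (S.f b) (ρ (S.f a) w) = (2 : F) • ρ (S.e (a ⨯₃ b)) w := by
  have h_hf := S.apply_h_apply_f h2 hρ (c := 0) (d := 2) (by norm_num) (by simpa using hw)
  have h_hff (x y) := S.apply_h_apply_f h2 hρ (c := 2) (d := -2) (by norm_num) (h_hf x) y
  have h_ab := hρ.apply_mul_apply (S.f a) (S.f b) S.h w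
  have h_ba := hρ.apply_mul_apply (S.f b) (S.f a) S.h w
  rw [S.f_f, ← cross_anticomm a b] at h_ba
  simp only [S.f_f, S.f_h, S.e_h, h_hff, hw, map_smul, map_zero, map_neg, LinearMap.smul_apply,
    LinearMap.neg_apply] at h_ab h_ba
  refine smul_right_injective V (mul_ne_zero h2 h3) ?_
  linear_combination (norm := module) (2 : F) • h_ba - h_ab

theorem apply_e_apply_e_of_apply_h_eq_zero (h3 : (3 : F) ≠ 0) (a b : Fin 3 → F) :
    ρ (S.e b) (ρ (S.e a) w) = (-2 : F) • ρ (S.f (a ⨯₃ b)) w := by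
  simpa using S.flip.apply_f_apply_f_of_apply_h_eq_zero h2 hρ (by simpa using hw) h3 a b

theorem apply_f_apply_e_comm_of_apply_h_eq_zero (a b : Fin 3 → F) :
    ρ (S.f b) (ρ (S.e a) w) = ρ (S.e a) (ρ (S.f b) w) := by
  have h_hf := S.apply_h_apply_f h2 hρ (c := 0) (d := 2) (by norm_num) (by simpa using hw) b
  have h_hef := hρ.apply_mul_apply S.h (S.e a) (S.f b) w
  simp only [S.h_e, S.h_f, S.e_f, h_hf, hw, map_smul, map_zero, LinearMap.smul_apply] at h_hef
  refine smul_right_injective V h2 ?_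
  linear_combination (norm := module) -h_hef

theorem apply_e_apply_f_apply_e_of_apply_h_eq_zero (h3 : (3 : F) ≠ 0) (a b c : Fin 3 → F) :
    ρ (S.e c) (ρ (S.f b) (ρ (S.e a) w)) = (2 * (a ⬝ᵥ b)) • ρ (S.e c) w := by
  have h_efe := hρ.apply_mul_apply (S.e a) (S.f b) (S.e c) w
  have h_cross : b ⨯₃ (a ⨯₃ c) = (c ⨯₃ a) ⨯₃ b := by
    rw [← cross_anticomm, ← cross_anticomm c a, map_neg, LinearMap.neg_apply, neg_neg]
  simp only [S.e_e, S.e_f, S.f_e, S.h_e, S.apply_f_apply_f_of_apply_h_eq_zero h2 hρ hw h3,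
    S.apply_e_apply_e_of_apply_h_eq_zero h2 hρ hw h3, hw, map_smul, map_zero,
    LinearMap.smul_apply, h_cross] at h_efe
  linear_combination (norm := module) -h_efe

variable {S} in
theorem NoInvariants.actsLikeH (hinv : S.NoInvariants ρ) (h3 : (3 : F) ≠ 0) :
    S.ActsLikeH ρ w := by
  have h_comm (a b) := S.apply_f_apply_e_comm_of_apply_h_eq_zero h2 hρ hw a b
  have h_fe (a b) : ρ (S.f b) (ρ (S.e a) w) = (2 * (a ⬝ᵥ b)) • w := by
    rw [← sub_eq_zero]
    refine hinv _ (fun c ↦ ?_) fun c ↦ ?_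
    · rw [map_sub, map_smul, S.apply_e_apply_f_apply_e_of_apply_h_eq_zero h2 hρ hw h3, sub_self]
    · have h_flip :=
        S.flip.apply_e_apply_f_apply_e_of_apply_h_eq_zero h2 hρ (by simpa using hw) h3 b a c
      rw [h_comm, map_sub, map_smul]
      simpa [sub_eq_zero, dotProduct_comm] using h_flip
  exact
    { h := hw
      h_e := S.apply_h_apply_e h2 hρ (c := 0) (by norm_num) (by simpa using hw)
      h_f := S.apply_h_apply_f h2 hρ (c := 0) (by norm_num) (by simpa using hw)
      e_e := S.apply_e_apply_e_of_apply_h_eq_zero h2 hρ hw h3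
      f_f := S.apply_f_apply_f_of_apply_h_eq_zero h2 hρ hw h3
      e_f := fun a b ↦ by rw [← h_comm, h_fe, dotProduct_comm]
      f_e := h_fe }

end WeightZero

section Existence

variable {S} (h2 : (2 : F) ≠ 0) (hρ : IsMalcevRep mul ρ) (hinv : S.NoInvariants ρ)

include h2 hρ hinv

theorem NoInvariants.eq_zero_of_apply_h_eq_two_smul (hzero : ∀ v, ρ S.h v = 0 → v = 0) {u : V}
    (hu : ρ S.h u = (2 : F) • u) : u = 0 := by
  have h_e (a) : ρ (S.e a) u = 0 := by
    refine hzero _ ?_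
    rw [S.apply_h_apply_e h2 hρ (c := 2) (d := 0) (by norm_num) hu, zero_smul]
  have h_hf := S.apply_h_apply_f h2 hρ (c := 2) (d := -2) (by norm_num) hu
  have h_ff (a b) : ρ (S.f b) (ρ (S.f a) u) = 0 := by
    refine hzero _ ?_
    rw [S.apply_h_apply_f h2 hρ (c := -2) (d := 0) (by norm_num) (h_hf a), zero_smul]
  have h_f_smul (a b c : Fin 3 → F) :
      (a ⬝ᵥ c) • ρ (S.f b) u = (b ⬝ᵥ c) • ρ (S.f a) u := by
    have h_ffe := hρ.apply_mul_apply (S.f a) (S.f b) (S.e c) u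
    simp only [S.f_f, S.f_e, S.e_e, cross_cross_eq_smul_sub_smul, h_e, h_ff, h_hf, hu, map_smul,
      map_sub, map_zero, LinearMap.smul_apply, LinearMap.sub_apply] at h_ffe
    refine smul_right_injective V h2 ?_
    linear_combination (norm := module) -h_ffe
  have h_f : ρ.flip u ∘ₗ S.f = 0 := by
    refine (Pi.basisFun F (Fin 3)).ext fun i ↦ ?_
    simpa using h_f_smul (Pi.single (i + 1) 1) (Pi.single i 1) (Pi.single (i + 1) 1)
  exact hinv u h_e (LinearMap.congr_fun h_f)

theorem NoInvariants.eq_zero_of_apply_h_eq_neg_two_smul (hzero : ∀ v, ρ S.h v = 0 → v = 0)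
    {u : V} (hu : ρ S.h u = (-2 : F) • u) : u = 0 :=
  hinv.flip.eq_zero_of_apply_h_eq_two_smul h2 hρ (fun v hv ↦ hzero v (by simpa using hv))
    (by simp [hu])

theorem NoInvariants.exists_apply_h_eq_zero [Nontrivial V] (h3 : (3 : F) ≠ 0) :
    ∃ w ≠ 0, ρ S.h w = 0 := by
  by_contra! h
  have hzero (v : V) (hv : ρ S.h v = 0) : v = 0 := by_contra fun hv' ↦ h v hv' hv
  obtain ⟨v, hv⟩ := exists_ne (0 : V)
  have h_sq : ρ S.h (ρ S.h v) = (4 : F) • v := by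
    refine sub_eq_zero.mp (hzero _ ?_)
    rw [map_sub, map_smul, hinv.apply_h_cubed h2 hρ h3, sub_self]
  have h_neg : ρ S.h v - (2 : F) • v = 0 := by
    refine hinv.eq_zero_of_apply_h_eq_neg_two_smul h2 hρ hzero ?_
    rw [map_sub, map_smul, h_sq]
    module
  exact hv (hinv.eq_zero_of_apply_h_eq_two_smul h2 hρ hzero (sub_eq_zero.mp h_neg))

end Existence

theorem ActsLikeH.eq_zero_of_smul_add_add_eq_zero {S : ZornFrame mul} {w : V}
    (hw : S.ActsLikeH ρ w) (h2 : (2 : F) ≠ 0) (hw0 : w ≠ 0) {c : F} {u v : Fin 3 → F}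
    (h : c • w + ρ (S.e u) w + ρ (S.f v) w = 0) : c = 0 ∧ u = 0 ∧ v = 0 := by
  have h_h := congrArg (ρ S.h) h
  have h_hh := congrArg (ρ S.h) h_h
  simp only [map_add, map_smul, map_zero, hw.h, hw.h_e, hw.h_f] at h_h h_hh
  have h_e : ρ (S.e u) w = 0 := by
    refine smul_right_injective V (pow_ne_zero 3 h2) ?_
    linear_combination (norm := module) h_hh - (2 : F) • h_h
  have h_f : ρ (S.f v) w = 0 := by
    refine smul_right_injective V (pow_ne_zero 3 h2) ?_
    linear_combination (norm := module) h_hh + (2 : F) • h_h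
  have h_smul {d : F} (hd : (2 * d) • w = 0) : d = 0 := by simpa [h2, hw0] using hd
  refine ⟨?_, dotProduct_eq_zero u fun b ↦ h_smul ?_, dotProduct_eq_zero v fun b ↦ h_smul ?_⟩
  · simpa [h_e, h_f, hw0] using h
  · rw [← hw.f_e, h_e, map_zero]
  · rw [← hw.e_f, h_f, map_zero]

theorem apply_h_eq_zero_of_apply_e_of_apply_f (h2 : (2 : F) ≠ 0) (hρ : IsMalcevRep mul ρ) {v : V}
    (he : ∀ a, ρ (S.e a) v = 0) (hf : ∀ a, ρ (S.f a) v = 0) : ρ S.h v = 0 := by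
  have h_ehf := hρ.apply_mul_apply (S.e (Pi.single 0 1)) S.h (S.f (Pi.single 0 1)) v
  have h_fhe := hρ.apply_mul_apply (S.f (Pi.single 0 1)) S.h (S.e (Pi.single 0 1)) v
  simp only [S.e_f, S.f_e, S.e_h, S.f_h, S.h_e, S.h_f, he, hf, single_one_dotProduct,
    Pi.single_eq_same, map_smul, map_zero, LinearMap.smul_apply] at h_ehf h_fhe
  refine smul_right_injective V (pow_ne_zero 2 h2) ?_
  linear_combination (norm := module) -h_ehf - h_fhe

end ZornFrame

section Irreducible

variable {ρ : M →ₗ[F] Module.End F V}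
  (hirr : ∀ W : Submodule F V, (∀ v ∈ W, ∀ a : M, ρ a v ∈ W) → W = ⊥ ∨ W = ⊤)

include hirr

theorem eq_zero_of_irreducible_of_forall_apply_eq_zero (hne : ρ ≠ 0) {v : V}
    (hv : ∀ a, ρ a v = 0) : v = 0 := by
  have hW : ⨅ a, LinearMap.ker (ρ a) = ⊥ := by
    refine (hirr _ fun u hu a ↦ ?_).resolve_right fun h ↦ hne ?_
    · rw [(Submodule.mem_iInf _).mp hu a]
      exact Submodule.zero_mem _
    · ext a u
      have hu : u ∈ ⨅ a, LinearMap.ker (ρ a) := h ▸ Submodule.mem_top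
      exact (Submodule.mem_iInf _).mp hu a
  exact (Submodule.mem_bot F).mp (hW ▸ (Submodule.mem_iInf _).mpr hv)

theorem surjective_of_irreducible_of_map_mul {N : Type*} [AddCommGroup N] [Module F N]
    {ψ : N →ₗ[F] V} (hψ : ψ ≠ 0) (act : N → M → N) (h : ∀ x a, ψ (act x a) = ρ a (ψ x)) :
    Function.Surjective ψ := by
  refine LinearMap.range_eq_top.mp ((hirr _ ?_).resolve_left (mt LinearMap.range_eq_bot.mp hψ))
  rintro _ ⟨x, rfl⟩ a
  exact ⟨act x a, h x a⟩

end Irreducible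

section M7

/-- The multiplication `m7mul` of `M₇(F)` as a bilinear map. -/
def m7Bilin (F : Type*) [Field F] : (Fin 7 → F) →ₗ[F] (Fin 7 → F) →ₗ[F] (Fin 7 → F) :=
  LinearMap.mk₂ F m7mul
    (fun x y z ↦ by ext i; fin_cases i <;> simp [m7mul] <;> ring)
    (fun c x y ↦ by ext i; fin_cases i <;> simp [m7mul] <;> ring)
    (fun x y z ↦ by ext i; fin_cases i <;> simp [m7mul] <;> ring)
    (fun c x y ↦ by ext i; fin_cases i <;> simp [m7mul] <;> ring)

@[simp]
theorem m7Bilin_apply (x y : Fin 7 → F) : m7Bilin F x y = m7mul x y :=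
  rfl

/-- The Zorn frame of `M₇(F)` given by its standard basis. -/
def m7Frame (F : Type*) [Field F] : ZornFrame (m7Bilin F) where
  h := ![1, 0, 0, 0, 0, 0, 0]
  e :=
    { toFun u := ![0, u 0, u 1, u 2, 0, 0, 0]
      map_add' u v := by simp
      map_smul' c u := by simp }
  f :=
    { toFun v := ![0, 0, 0, 0, v 0, v 1, v 2]
      map_add' u v := by simp
      map_smul' c u := by simp }
  alt x := by ext i; fin_cases i <;> simp [m7mul] <;> ring
  h_e a := by ext i; fin_cases i <;> simp [m7mul]
  h_f a := by ext i; fin_cases i <;> simp [m7mul]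
  e_e a b := by ext i; fin_cases i <;> simp [m7mul, cross_apply]; ring
  f_f a b := by ext i; fin_cases i <;> simp [m7mul, cross_apply]; ring
  e_f a b := by ext i; fin_cases i <;> simp [m7mul, dotProduct, Fin.sum_univ_three]

theorem exists_eq_smul_h_add_e_add_f (x : Fin 7 → F) :
    ∃ u v, x = x 0 • (m7Frame F).h + (m7Frame F).e u + (m7Frame F).f v := by
  refine ⟨![x 1, x 2, x 3], ![x 4, x 5, x 6], ?_⟩
  ext i; fin_cases i <;> simp [m7Frame]

variable {ρ : (Fin 7 → F) →ₗ[F] Module.End F V}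

theorem noInvariants_m7Frame (h2 : (2 : F) ≠ 0) (hρ : IsMalcevRep (m7Bilin F) ρ) (hne : ρ ≠ 0)
    (hirr : ∀ W : Submodule F V, (∀ v ∈ W, ∀ a, ρ a v ∈ W) → W = ⊥ ∨ W = ⊤) :
    (m7Frame F).NoInvariants ρ := by
  intro v he hf
  have hh := (m7Frame F).apply_h_eq_zero_of_apply_e_of_apply_f h2 hρ he hf
  refine eq_zero_of_irreducible_of_forall_apply_eq_zero hirr hne fun x ↦ ?_
  obtain ⟨a, b, hx⟩ := exists_eq_smul_h_add_e_add_f x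
  rw [hx]
  simp only [map_add, map_smul, LinearMap.add_apply, LinearMap.smul_apply, he, hf, hh, smul_zero,
    add_zero]

variable (ρ) in
/-- The linear map `x ↦ 4 x₀ w + w·(hx)` from the regular module of `M₇(F)` to `V`, where `h = e₁`
and `x₀` is the `h`-coordinate of `x`; it is a homomorphism if `w` behaves like `h`. The formula
comes from `h(hx) = 4(x - x₀ h)` in `M₇(F)`: on the regular module, `w = h` gives multiplication by
`4`. -/
def regularMap (w : V) : (Fin 7 → F) →ₗ[F] V :=
  (4 : F) • (LinearMap.proj 0).smulRight w + ρ.flip w ∘ₗ m7Bilin F (m7Frame F).h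

theorem regularMap_h (w : V) : regularMap ρ w (m7Frame F).h = (4 : F) • w := by
  simp only [regularMap, LinearMap.add_apply, LinearMap.smul_apply, LinearMap.smulRight_apply,
    LinearMap.proj_apply, LinearMap.comp_apply, (m7Frame F).alt.self_eq_zero, map_zero, add_zero]
  simp [m7Frame]

theorem regularMap_e (w : V) (u : Fin 3 → F) :
    regularMap ρ w ((m7Frame F).e u) = (2 : F) • ρ ((m7Frame F).e u) w := by
  rw [← LinearMap.smul_apply, ← map_smul, ← (m7Frame F).h_e]
  simp [regularMap, m7Frame]

theorem regularMap_f (w : V) (v : Fin 3 → F) :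
    regularMap ρ w ((m7Frame F).f v) = (-2 : F) • ρ ((m7Frame F).f v) w := by
  rw [← LinearMap.smul_apply, ← map_smul, ← (m7Frame F).h_f]
  simp [regularMap, m7Frame]

theorem regularMap_mul {w : V} (hw : (m7Frame F).ActsLikeH ρ w) (x a : Fin 7 → F) :
    regularMap ρ w (m7mul x a) = ρ a (regularMap ρ w x) := by
  obtain ⟨u, v, hx⟩ := exists_eq_smul_h_add_e_add_f x
  obtain ⟨s, t, ha⟩ := exists_eq_smul_h_add_e_add_f a
  rw [← m7Bilin_apply, hx, ha]
  simp only [map_add, map_smul, LinearMap.add_apply, LinearMap.smul_apply, ZornFrame.e_e,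
    ZornFrame.e_f, ZornFrame.e_h, ZornFrame.f_e, ZornFrame.f_f, ZornFrame.f_h, ZornFrame.h_e,
    ZornFrame.h_f, (m7Frame F).alt.self_eq_zero, regularMap_h, regularMap_e, regularMap_f, map_zero,
    hw.h, hw.h_e, hw.h_f, hw.e_e, hw.e_f, hw.f_e, hw.f_f]
  module

theorem regularMap_injective (h2 : (2 : F) ≠ 0) {w : V} (hw : (m7Frame F).ActsLikeH ρ w)
    (hw0 : w ≠ 0) : Function.Injective (regularMap ρ w) := by
  rw [injective_iff_map_eq_zero]
  intro x hx0
  obtain ⟨u, v, hx⟩ := exists_eq_smul_h_add_e_add_f x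
  have h_sum : (2 * x 0) • w + ρ ((m7Frame F).e u) w + ρ ((m7Frame F).f (-v)) w = 0 := by
    refine smul_right_injective V h2 ?_
    rw [hx] at hx0
    simp only [map_add, map_smul, regularMap_h, regularMap_e, regularMap_f, map_neg,
      LinearMap.neg_apply] at hx0 ⊢
    linear_combination (norm := module) hx0
  obtain ⟨hc, hu, hv⟩ := hw.eq_zero_of_smul_add_add_eq_zero h2 hw0 h_sum
  rw [hx, hu, neg_eq_zero.mp hv, (mul_eq_zero.mp hc).resolve_left h2, zero_smul, map_zero,
    map_zero, add_zero, add_zero]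

end M7

end

/-- Every irreducible Malcev module over `M₇(F)` is isomorphic to the regular
module. -/
theorem stmt15_irreducible_is_regular
    {F V : Type*} [Field F] [AddCommGroup V] [Module F V]
    (h2 : (2 : F) ≠ 0) (h3 : (3 : F) ≠ 0)
    (ρ : (Fin 7 → F) →ₗ[F] Module.End F V)
    (hmod : IsMalcevFun (sneFun m7mul ρ))
    (hne : ρ ≠ 0)
    (hirr : ∀ W : Submodule F V,
      (∀ v ∈ W, ∀ a : Fin 7 → F, ρ a v ∈ W) → W = ⊥ ∨ W = ⊤) :
    ∃ ψ : (Fin 7 → F) →ₗ[F] V, Function.Bijective ψ ∧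
      ∀ x a : Fin 7 → F, ψ (m7mul x a) = ρ a (ψ x) := by
  have hρ : IsMalcevRep (m7Bilin F) ρ := isMalcevRep_of_isMalcevFun_sneFun h2 hmod
  have hinv := noInvariants_m7Frame h2 hρ hne hirr
  have : Nontrivial V :=
    not_subsingleton_iff_nontrivial.mp fun _ ↦ hne (Subsingleton.elim _ _)
  obtain ⟨w, hw0, hw⟩ := hinv.exists_apply_h_eq_zero h2 hρ h3
  have hH := hinv.actsLikeH h2 hρ hw h3
  have hinj := regularMap_injective h2 hH hw0
  have hsurj := surjective_of_irreducible_of_map_mul hirr (LinearMap.ne_zero_of_injective hinj)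
    m7mul (regularMap_mul hH)
  exact ⟨regularMap ρ w, ⟨hinj, hsurj⟩, regularMap_mul hH⟩
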